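/- Let m > 1 be an integer and let q be a real number with 0 < q < 1. Then ((q; q)_∞)^{2^{m-1}} / (q^{1/2^m}; q^{1/2^{m-1}})_∞ = ψ(q^{1/2^m}) · ∏_{k=1}^{m-1} (ψ(q^{1/2^k}))^{2^{m-1-k}}. -/

import Mathlib

/-- Infinite q-Pochhammer symbol `(a; q)_∞ = ∏_{i=0}^∞ (1 - a qⁱ)` (real version). -/
noncomputable def qPochR (a q : ℝ) : ℝ := ∏' i : ℕ, (1 - a * q ^ i)

/-- Ramanujan's theta function `ψ(q) = (q²;q²)_∞ / (q;q²)_∞`. -/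
noncomputable def psiR (q : ℝ) : ℝ := qPochR (q ^ 2) (q ^ 2) / qPochR q (q ^ 2)

theorem summable_norm_neg_mul_pow (a : ℝ) {q : ℝ} (hq : |q| < 1) :
    Summable fun i : ℕ => ‖-(a * q ^ i)‖ := by
  simpa [abs_mul] using (summable_geometric_of_lt_one (abs_nonneg q) hq).mul_left |a|

theorem multipliable_one_sub_mul_pow (a : ℝ) {q : ℝ} (hq : |q| < 1) :
    Multipliable fun i : ℕ => 1 - a * q ^ i := by
  simpa [sub_eq_add_neg] using
    multipliable_one_add_of_summable (summable_norm_neg_mul_pow a hq)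

theorem qPochR_ne_zero {a q : ℝ} (ha : |a| < 1) (hq : |q| < 1) : qPochR a q ≠ 0 := by
  have key := tprod_one_add_ne_zero_of_summable (f := fun i : ℕ => -(a * q ^ i))
    (fun i h => ?_) (summable_norm_neg_mul_pow a hq)
  · simpa [qPochR, sub_eq_add_neg] using key
  · have hlt : |a * q ^ i| < 1 := by
      rw [abs_mul, abs_pow]
      exact (mul_le_of_le_one_right (abs_nonneg a)
        (pow_le_one₀ (abs_nonneg q) hq.le)).trans_lt ha
    linarith [le_abs_self (a * q ^ i)]

/-- Splitting the factors of `(a; q)_∞` by the parity of the exponent. -/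
theorem qPochR_eq_mul (a : ℝ) {q : ℝ} (hq : |q| < 1) :
    qPochR a q = qPochR a (q ^ 2) * qPochR (a * q) (q ^ 2) := by
  have hq2 : |q ^ 2| < 1 := by
    rw [abs_pow]
    exact pow_lt_one₀ (abs_nonneg q) hq two_ne_zero
  have even_factor (k : ℕ) : 1 - a * q ^ (2 * k) = 1 - a * (q ^ 2) ^ k := by rw [pow_mul]
  have odd_factor (k : ℕ) : 1 - a * q ^ (2 * k + 1) = 1 - a * q * (q ^ 2) ^ k := by
    rw [pow_succ, pow_mul]; ring
  unfold qPochR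
  rw [← tprod_even_mul_odd (f := fun i : ℕ => 1 - a * q ^ i)]
  · simp only [even_factor, odd_factor]
  · simpa only [even_factor] using multipliable_one_sub_mul_pow a hq2
  · simpa only [odd_factor] using multipliable_one_sub_mul_pow (a * q) hq2

theorem psiR_eq_sq_div {x : ℝ} (hx : |x| < 1) :
    psiR x = qPochR (x ^ 2) (x ^ 2) ^ 2 / qPochR x x := by
  have hx2 : |x ^ 2| < 1 := by
    rw [abs_pow]
    exact pow_lt_one₀ (abs_nonneg x) hx two_ne_zero
  have h₁ := qPochR_ne_zero hx hx2
  have h₂ := qPochR_ne_zero hx2 hx2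
  rw [psiR, qPochR_eq_mul x hx, ← sq x]
  field_simp

/-- Telescoping product of `ψ` along a sequence of successive square roots. -/
theorem prod_psiR_pow_eq_div (x : ℕ → ℝ) (hx : ∀ n, |x n| < 1)
    (hsq : ∀ n, x (n + 1) ^ 2 = x n) (n : ℕ) :
    ∏ k ∈ Finset.Icc 1 n, psiR (x k) ^ 2 ^ (n - k) =
      qPochR (x 0) (x 0) ^ 2 ^ n / qPochR (x n) (x n) := by
  induction n with
  | zero => simp [qPochR_ne_zero (hx 0) (hx 0)]
  | succ n ih =>
    have hstep : ∏ k ∈ Finset.Icc 1 n, psiR (x k) ^ 2 ^ (n + 1 - k) =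
        (∏ k ∈ Finset.Icc 1 n, psiR (x k) ^ 2 ^ (n - k)) ^ 2 := by
      rw [← Finset.prod_pow]
      refine Finset.prod_congr rfl fun k hk => ?_
      rw [← pow_mul, ← pow_succ, Nat.succ_sub (Finset.mem_Icc.1 hk).2]
    have h₁ := qPochR_ne_zero (hx n) (hx n)
    have h₂ := qPochR_ne_zero (hx (n + 1)) (hx (n + 1))
    rw [Finset.prod_Icc_succ_top (by omega), hstep, ih, Nat.sub_self, pow_zero, pow_one,
      psiR_eq_sq_div (hx (n + 1)), hsq, div_pow, ← pow_mul, ← pow_succ]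
    field_simp

theorem poch_psi_product (m : ℕ) (hm : 1 < m) (q : ℝ) (hq0 : 0 < q) (hq1 : q < 1) :
    (qPochR q q) ^ (2 ^ (m - 1)) /
        qPochR (q ^ ((1 : ℝ) / 2 ^ m)) (q ^ ((1 : ℝ) / 2 ^ (m - 1))) =
      psiR (q ^ ((1 : ℝ) / 2 ^ m)) *
        ∏ k ∈ Finset.Icc 1 (m - 1), (psiR (q ^ ((1 : ℝ) / 2 ^ k))) ^ (2 ^ (m - 1 - k)) := by
  obtain ⟨n, rfl⟩ : ∃ n, m = n + 1 := ⟨m - 1, by omega⟩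
  have hx (k : ℕ) : |q ^ ((1 : ℝ) / 2 ^ k)| < 1 := by
    rw [abs_of_pos (Real.rpow_pos_of_pos hq0 _)]
    exact Real.rpow_lt_one hq0.le hq1 (by positivity)
  have hsq (k : ℕ) : (q ^ ((1 : ℝ) / 2 ^ (k + 1))) ^ 2 = q ^ ((1 : ℝ) / 2 ^ k) := by
    rw [← Real.rpow_mul_natCast hq0.le]
    congr 1
    push_cast
    field_simp
    ring
  have htel := prod_psiR_pow_eq_div (fun k => q ^ ((1 : ℝ) / 2 ^ k)) hx hsq n
  simp only [pow_zero, div_one, Real.rpow_one] at htel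
  have h₁ := qPochR_ne_zero (hx n) (hx n)
  have h₂ := qPochR_ne_zero (hx (n + 1)) (hx n)
  rw [Nat.add_sub_cancel, htel, psiR, hsq]
  field_simp
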